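/- arXiv:1911.03354 — 2 statements merged into one kernel-verified Lean document; each statement's English description precedes it below -/
import Mathlib

section
/- The subgroup of G_{d,q} generated by the elements γ ∈ G_{d,q} having 1 as an eigenvalue of multiplicity exactly 2 (i.e. those γ ≠ 1 whose eigenspace ker(γ − I₃) has dimension 2) equals the set of diagonal matrices { diag(ξ^{(q³+1)a}, ξ^{(q³+1)b}, ξ^{(q³+1)c}) : a, b, c ∈ ℤ }. -/
open Matrix

/-!
Write `N = q³ + 1`, `σ` for the rotation of the coordinates, and diagonal matrices as vectors.
Every element of `G_{d,q}` is a diagonal matrix `t` times a power of the permutation matrix `B`.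
A factor `B` or `B²` moves all three coordinates cyclically, so it leaves room for a fixed space of
dimension at most one; hence a reflection in `G_{d,q}` is diagonal with a single entry `c ≠ 1`.

The character `w(t) = t₀^{q²} t₁^{-q} t₂` is trivial on `A = (1, ξ, ξ^q)` and satisfies
`w(t ∘ σ) = w(t)^{-q} t₀^N`, so it maps all diagonal elements of `G_{d,q}` to powers of `ξ^N`.
If `c` sits in the last coordinate then `w(t) = c`, and the other positions reduce to this one by
rotation: `c` is a power of `ξ^N`. Conversely, the same exponents give
`(1, 1, ξ^N) = A^{q²} (A ∘ σ)^{-q} (A ∘ σ²)`, which lies in `G_{d,q}`.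
-/

section Monomial

variable {ι R : Type*} [Fintype ι] [DecidableEq ι]

section Semiring

variable [Semiring R]

/-- Families of units as invertible diagonal matrices. -/
def diagUnits : (ι → Rˣ) →* (Matrix ι ι R)ˣ :=
  (Units.map (diagonalRingHom ι R : (ι → R) →* Matrix ι ι R)).comp
    (MulEquiv.piUnits (M := fun _ : ι ↦ R)).symm.toMonoidHom

@[simp]
lemma coe_diagUnits (t : ι → Rˣ) :
    (diagUnits t : Matrix ι ι R) = diagonal fun i ↦ (t i : R) := rfl

/-- Permutation matrices as invertible matrices. As for `Matrix.permMatrixHom`, the matrix of `σ`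
sends the `i`-th basis vector to the `σ i`-th one. -/
def permUnits : Equiv.Perm ι →* (Matrix ι ι R)ˣ :=
  (permMatrixHom : Equiv.Perm ι →* Matrix ι ι R).toHomUnits

@[simp]
lemma coe_permUnits (σ : Equiv.Perm ι) :
    ((permUnits σ : (Matrix ι ι R)ˣ) : Matrix ι ι R) = σ⁻¹.permMatrix R := rfl

lemma coe_diagUnits_vecCons (a b c : Rˣ) :
    (diagUnits ![a, b, c] : Matrix (Fin 3) (Fin 3) R) = diagonal ![(a : R), (b : R), (c : R)] := by
  rw [coe_diagUnits]
  congr 1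
  funext i
  fin_cases i <;> rfl

lemma permUnits_mul_diagUnits_mul_inv (σ : Equiv.Perm ι) (t : ι → Rˣ) :
    permUnits σ * diagUnits t * (permUnits σ)⁻¹ = diagUnits (t ∘ ⇑σ⁻¹) := by
  rw [mul_inv_eq_iff_eq_mul]
  ext i j
  simp only [Units.val_mul, coe_permUnits, coe_diagUnits, mul_diagonal, diagonal_mul,
    PEquiv.toMatrix_apply, Equiv.toPEquiv_apply, Option.mem_some_iff, Function.comp_apply]
  obtain rfl | h := eq_or_ne (σ⁻¹ i) j
  · simp only [if_true, one_mul, mul_one]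
  · simp only [if_neg h, zero_mul, mul_zero]

lemma permUnits_mem_normalizer {S : Subgroup (ι → Rˣ)} {σ : Equiv.Perm ι}
    (hS : ∀ t, t ∘ ⇑σ⁻¹ ∈ S ↔ t ∈ S) :
    permUnits σ ∈ Subgroup.normalizer (S.map (diagUnits (R := R)) : Set (Matrix ι ι R)ˣ) := by
  refine Subgroup.mem_normalizer_iff.2 fun γ ↦ ⟨?_, ?_⟩
  · rintro ⟨t, ht, rfl⟩
    exact ⟨t ∘ ⇑σ⁻¹, (hS t).2 ht, (permUnits_mul_diagUnits_mul_inv σ t).symm⟩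
  · rintro ⟨t, ht, hγ⟩
    have ht' : (t ∘ σ) ∘ ⇑σ⁻¹ = t := by ext i; simp
    refine ⟨t ∘ σ, (hS _).1 (ht'.symm ▸ ht), ?_⟩
    have := permUnits_mul_diagUnits_mul_inv σ (t ∘ σ)
    rw [ht', hγ] at this
    simpa using this

lemma exists_diagUnits_mul_permUnits_of_mem_closure {S : Subgroup (ι → Rˣ)}
    {σ : Equiv.Perm ι} (hS : ∀ t, t ∘ ⇑σ⁻¹ ∈ S ↔ t ∈ S) {a : ι → Rˣ} (ha : a ∈ S)
    {γ : (Matrix ι ι R)ˣ} (hγ : γ ∈ Subgroup.closure {diagUnits a, permUnits σ}) :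
    ∃ t ∈ S, ∃ τ ∈ Subgroup.zpowers σ, diagUnits t * permUnits τ = γ := by
  have hle : Subgroup.closure {diagUnits a, permUnits σ} ≤
      S.map diagUnits ⊔ Subgroup.zpowers (permUnits σ) := by
    rw [Subgroup.closure_le, Set.insert_subset_iff, Set.singleton_subset_iff]
    exact ⟨Subgroup.mem_sup_left (Subgroup.mem_map_of_mem _ ha),
      Subgroup.mem_sup_right (Subgroup.mem_zpowers _)⟩
  have hmul := Subgroup.coe_mul_of_right_le_normalizer_left _ _ <|
    Subgroup.zpowers_le.2 (permUnits_mem_normalizer hS)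
  obtain ⟨_, ⟨t, ht, rfl⟩, _, ⟨k, rfl⟩, rfl⟩ :=
    Set.mem_mul.1 (hmul ▸ SetLike.mem_coe.2 (hle hγ))
  exact ⟨t, ht, σ ^ k, ⟨k, rfl⟩, by simp only [map_zpow]⟩

end Semiring

section CommRing

variable [CommRing R]

lemma diagUnits_mul_permUnits_mulVec_apply (t : ι → Rˣ) (σ : Equiv.Perm ι) (v : ι → R) (i : ι) :
    ((diagUnits t * permUnits σ : (Matrix ι ι R)ˣ) *ᵥ v) i = t i * v (σ⁻¹ i) := by
  rw [Units.val_mul, ← mulVec_mulVec, coe_diagUnits, mulVec_diagonal, coe_permUnits,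
    permMatrix_mulVec, Function.comp_apply]

lemma eq_zero_of_diagUnits_mul_permUnits_mulVec_eq_self {t : ι → Rˣ} {σ : Equiv.Perm ι} {i : ι}
    (hσ : ∀ j, σ.SameCycle i j) {v : ι → R}
    (hv : (diagUnits t * permUnits σ : (Matrix ι ι R)ˣ) *ᵥ v = v) (hvi : v i = 0) : v = 0 := by
  have hzeros : Set.MapsTo σ {j | v j = 0} {j | v j = 0} := fun j (hj : v j = 0) ↦ by
    have := congrFun hv (σ j)
    rw [diagUnits_mul_permUnits_mulVec_apply, Equiv.Perm.inv_def, Equiv.symm_apply_apply, hj,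
      mul_zero] at this
    exact this.symm
  funext j
  obtain ⟨k, -, rfl⟩ := (hσ j).exists_pow_eq'
  exact hzeros.perm_pow k hvi

end CommRing

end Monomial

section Pseudoreflection

variable {ι K : Type*} [Fintype ι] [DecidableEq ι] [Field K]

/-- A pseudoreflection is a matrix `M` such that `M - 1` has rank one, that is, a nonidentity matrix
fixing a hyperplane pointwise. -/
def IsPseudoreflection (M : Matrix ι ι K) : Prop := (M - 1).rank = 1

lemma rank_add_finrank_ker_toLin' (M : Matrix ι ι K) :
    M.rank + Module.finrank K (LinearMap.ker (toLin' M)) = Fintype.card ι := by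
  rw [rank, ← toLin'_apply', LinearMap.finrank_range_add_finrank_ker,
    Module.finrank_fintype_fun_eq_card]

lemma isPseudoreflection_iff_finrank_ker (M : Matrix ι ι K) :
    IsPseudoreflection M ↔
      Module.finrank K (LinearMap.ker (toLin' (M - 1))) + 1 = Fintype.card ι := by
  have := rank_add_finrank_ker_toLin' (M - 1)
  rw [IsPseudoreflection]
  omega

lemma isPseudoreflection_diagUnits_iff {t : ι → Kˣ} :
    IsPseudoreflection (diagUnits t : Matrix ι ι K) ↔ ∃ i, ∃ c ≠ 1, t = Pi.mulSingle i c := by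
  classical
  have hrank : ((diagUnits t : Matrix ι ι K) - 1).rank = Fintype.card {i // t i ≠ 1} := by
    rw [coe_diagUnits, ← diagonal_one, diagonal_sub, rank_diagonal]
    simp only [ne_eq, sub_eq_zero, Units.val_eq_one]
  rw [IsPseudoreflection, hrank, Fintype.card_eq_one_iff]
  constructor
  · rintro ⟨⟨i, hi⟩, hunique⟩
    refine ⟨i, t i, hi, funext fun j ↦ ?_⟩
    obtain rfl | hji := eq_or_ne j i
    · simp
    · rw [Pi.mulSingle_eq_of_ne hji]
      by_contra hj
      exact hji (congrArg Subtype.val (hunique ⟨j, hj⟩))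
  · rintro ⟨i, c, hc, rfl⟩
    refine ⟨⟨i, by simpa using hc⟩, fun ⟨j, hj⟩ ↦ Subtype.ext ?_⟩
    by_contra hji
    exact hj (Pi.mulSingle_eq_of_ne (M := fun _ ↦ Kˣ) hji c)

lemma card_le_rank_diagUnits_mul_permUnits_sub_one_add_one {t : ι → Kˣ} {σ : Equiv.Perm ι} {i : ι}
    (hσ : ∀ j, σ.SameCycle i j) :
    Fintype.card ι ≤
      (((diagUnits t * permUnits σ : (Matrix ι ι K)ˣ) : Matrix ι ι K) - 1).rank + 1 := by
  set M : Matrix ι ι K := ((diagUnits t * permUnits σ : (Matrix ι ι K)ˣ) : Matrix ι ι K)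
  let evalAt : LinearMap.ker (toLin' (M - 1)) →ₗ[K] K :=
    LinearMap.proj (φ := fun _ : ι ↦ K) i ∘ₗ (LinearMap.ker (toLin' (M - 1))).subtype
  have hinj : Function.Injective evalAt := by
    refine (injective_iff_map_eq_zero evalAt).2 fun ⟨v, hv⟩ hvi ↦ Subtype.ext ?_
    rw [LinearMap.mem_ker, toLin'_apply, sub_mulVec, one_mulVec, sub_eq_zero] at hv
    exact eq_zero_of_diagUnits_mul_permUnits_mulVec_eq_self hσ hv hvi
  have hker := LinearMap.finrank_le_finrank_of_injective hinj
  rw [Module.finrank_self] at hker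
  have := rank_add_finrank_ker_toLin' (M - 1)
  omega

end Pseudoreflection

section Rotation

lemma zpow_mem_zpowers_zpow {G : Type*} [Group G] {u c : G} (hc : c ∈ Subgroup.zpowers u) (n : ℤ) :
    c ^ n ∈ Subgroup.zpowers (u ^ n) := by
  obtain ⟨k, rfl⟩ := hc
  exact ⟨k, zpow_comm u n k⟩

lemma forall_fin_three_of_finRotate {p : Fin 3 → Prop} (h2 : p 2)
    (hrot : ∀ i, p (finRotate 3 i) → p i) (i : Fin 3) : p i := by
  have h1 := hrot 1 h2
  have h0 := hrot 0 h1
  fin_cases i <;> assumption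

end Rotation

section Weight

variable {M : Type*} [CommGroup M]

/-- Additively, the functional `(x₀, x₁, x₂) ↦ q² x₀ - q x₁ + x₂`. Modulo `q³ + 1`, rotating the
coordinates multiplies it by `-q`, and it vanishes on `(0, 1, q)`. -/
def weightHom (q : ℤ) : (Fin 3 → M) →* M where
  toFun t := t 0 ^ q ^ 2 * t 1 ^ (-q) * t 2
  map_one' := by simp
  map_mul' s t := by
    simp only [Pi.mul_apply, mul_zpow, mul_mul_mul_comm]

lemma weightHom_apply (q : ℤ) (t : Fin 3 → M) :
    weightHom q t = t 0 ^ q ^ 2 * t 1 ^ (-q) * t 2 := rfl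

lemma weightHom_comp_finRotate (q : ℤ) (t : Fin 3 → M) :
    weightHom q (t ∘ finRotate 3) = weightHom q t ^ (-q) * t 0 ^ (q ^ 3 + 1) := by
  change t 1 ^ q ^ 2 * t 2 ^ (-q) * t 0 =
    (t 0 ^ q ^ 2 * t 1 ^ (-q) * t 2) ^ (-q) * t 0 ^ (q ^ 3 + 1)
  apply Additive.ofMul.injective
  simp only [ofMul_mul, ofMul_zpow]
  module

/-- The vectors of powers of `u` whose `weightHom q` is a power of `u ^ (q ^ 3 + 1)`. For a
primitive `d`-th root of unity `u` they include the diagonal elements of `G_{d,q}`. -/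
def weightSubgroup (u : M) (q : ℤ) : Subgroup (Fin 3 → M) :=
  Subgroup.pi Set.univ (fun _ ↦ Subgroup.zpowers u) ⊓
    (Subgroup.zpowers (u ^ (q ^ 3 + 1))).comap (weightHom q)

lemma mem_weightSubgroup {u : M} {q : ℤ} {t : Fin 3 → M} :
    t ∈ weightSubgroup u q ↔ (∀ i, t i ∈ Subgroup.zpowers u) ∧
      weightHom q t ∈ Subgroup.zpowers (u ^ (q ^ 3 + 1)) := by
  simp [weightSubgroup, Subgroup.mem_pi]

lemma comp_finRotate_mem_weightSubgroup {u : M} {q : ℤ} {t : Fin 3 → M}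
    (ht : t ∈ weightSubgroup u q) : t ∘ finRotate 3 ∈ weightSubgroup u q := by
  rw [mem_weightSubgroup] at ht ⊢
  refine ⟨fun i ↦ ht.1 _, ?_⟩
  rw [weightHom_comp_finRotate]
  exact mul_mem (zpow_mem ht.2 _) (zpow_mem_zpowers_zpow (ht.1 0) _)

lemma comp_finRotate_mem_weightSubgroup_iff {u : M} {q : ℤ} {t : Fin 3 → M} :
    t ∘ finRotate 3 ∈ weightSubgroup u q ↔ t ∈ weightSubgroup u q := by
  refine ⟨fun ht ↦ ?_, comp_finRotate_mem_weightSubgroup⟩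
  have hthrice : ((t ∘ finRotate 3) ∘ finRotate 3) ∘ finRotate 3 = t := by
    ext i; fin_cases i <;> rfl
  exact hthrice ▸
    comp_finRotate_mem_weightSubgroup (comp_finRotate_mem_weightSubgroup ht)

lemma vecCons_zpow_mem_weightSubgroup (u : M) (q : ℤ) : ![1, u, u ^ q] ∈ weightSubgroup u q := by
  refine mem_weightSubgroup.2 ⟨?_, ?_⟩
  · simp [Fin.forall_fin_succ, one_mem, zpow_mem]
  · simp [weightHom_apply]

lemma mem_zpowers_of_mulSingle_mem_weightSubgroup {u : M} {q : ℤ} {c : M} (i : Fin 3)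
    (h : Pi.mulSingle i c ∈ weightSubgroup u q) : c ∈ Subgroup.zpowers (u ^ (q ^ 3 + 1)) := by
  refine forall_fin_three_of_finRotate
    (p := fun j ↦ Pi.mulSingle j c ∈ weightSubgroup u q → c ∈ Subgroup.zpowers (u ^ (q ^ 3 + 1)))
    (fun h ↦ ?_) (fun j ih h ↦ ih ?_) i h
  · simpa [weightHom_apply] using (mem_weightSubgroup.1 h).2
  · rwa [← comp_finRotate_mem_weightSubgroup_iff, Pi.mulSingle_comp_equiv, Equiv.symm_apply_apply]

lemma mulSingle_two_zpow_eq (u : M) (q : ℤ) :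
    Pi.mulSingle 2 (u ^ (q ^ 3 + 1)) =
      ![1, u, u ^ q] ^ q ^ 2 * (![1, u, u ^ q] ∘ finRotate 3) ^ (-q) *
        ((![1, u, u ^ q] ∘ finRotate 3) ∘ finRotate 3) := by
  funext i
  apply Additive.ofMul.injective
  fin_cases i
  · change 0 = q ^ 2 • 0 + -q • Additive.ofMul u + q • Additive.ofMul u
    module
  · change 0 = q ^ 2 • Additive.ofMul u + -q • q • Additive.ofMul u + 0
    module
  · change (q ^ 3 + 1) • Additive.ofMul u = q ^ 2 • q • Additive.ofMul u + -q • 0 + Additive.ofMul u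
    module

lemma mulSingle_mem_of_comp_finRotate_mem {S : Subgroup (Fin 3 → M)}
    (hS : ∀ t ∈ S, t ∘ finRotate 3 ∈ S) {u : M} {q : ℤ} (hu : ![1, u, u ^ q] ∈ S) (i : Fin 3)
    {c : M} (hc : c ∈ Subgroup.zpowers (u ^ (q ^ 3 + 1))) : Pi.mulSingle i c ∈ S := by
  have hmem : Pi.mulSingle i (u ^ (q ^ 3 + 1)) ∈ S := by
    refine forall_fin_three_of_finRotate
      (p := fun j ↦ Pi.mulSingle j (u ^ (q ^ 3 + 1)) ∈ S) ?_ (fun j hj ↦ ?_) i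
    · rw [mulSingle_two_zpow_eq]
      exact mul_mem (mul_mem (zpow_mem hu _) (zpow_mem (hS _ hu) _)) (hS _ (hS _ hu))
    · simpa only [Pi.mulSingle_comp_equiv, Equiv.symm_apply_apply] using hS _ hj
  obtain ⟨k, rfl⟩ := hc
  simpa only [Pi.mulSingle_zpow] using zpow_mem hmem k

end Weight

section Trihedral

variable {K : Type*} [Field K]

/-- The group `G_{d,q}` of the theorem, with an arbitrary unit `u` in place of a primitive `d`-th
root of unity `ξ`. -/
def trihedralGroup (u : Kˣ) (q : ℤ) : Subgroup (Matrix (Fin 3) (Fin 3) K)ˣ :=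
  Subgroup.closure {diagUnits ![1, u, u ^ q], permUnits (finRotate 3)⁻¹}

lemma sameCycle_of_mem_zpowers_finRotate {τ : Equiv.Perm (Fin 3)}
    (hτ : τ ∈ Subgroup.zpowers (finRotate 3)⁻¹) (hne : τ ≠ 1) (j : Fin 3) : τ.SameCycle 0 j := by
  have heven : Equiv.Perm.sign τ = 1 := by
    obtain ⟨k, rfl⟩ := hτ
    simp [sign_finRotate]
  have htrans : ∀ τ : Equiv.Perm (Fin 3), Equiv.Perm.sign τ = 1 → τ ≠ 1 →
      ∀ j, τ.SameCycle 0 j := by decide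
  exact htrans τ heven hne j

lemma exists_mulSingle_of_isPseudoreflection {u : Kˣ} {q : ℤ} {γ : (Matrix (Fin 3) (Fin 3) K)ˣ}
    (hγ : γ ∈ trihedralGroup u q) (hrefl : IsPseudoreflection (γ : Matrix (Fin 3) (Fin 3) K)) :
    ∃ i, ∃ c ∈ Subgroup.zpowers (u ^ (q ^ 3 + 1)), diagUnits (Pi.mulSingle i c) = γ := by
  have hrot (t : Fin 3 → Kˣ) :
      t ∘ ⇑((finRotate 3)⁻¹)⁻¹ ∈ weightSubgroup u q ↔ t ∈ weightSubgroup u q := by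
    rw [inv_inv, comp_finRotate_mem_weightSubgroup_iff]
  obtain ⟨t, ht, τ, hτ, rfl⟩ := exists_diagUnits_mul_permUnits_of_mem_closure hrot
    (vecCons_zpow_mem_weightSubgroup u q) hγ
  obtain rfl : τ = 1 := by
    by_contra hne
    have hcard := card_le_rank_diagUnits_mul_permUnits_sub_one_add_one (t := t)
      (sameCycle_of_mem_zpowers_finRotate hτ hne)
    rw [hrefl, Fintype.card_fin] at hcard
    omega
  rw [map_one, mul_one] at hrefl ⊢
  obtain ⟨i, c, -, rfl⟩ := isPseudoreflection_diagUnits_iff.1 hrefl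
  exact ⟨i, c, mem_zpowers_of_mulSingle_mem_weightSubgroup i ht, rfl⟩

lemma diagUnits_mulSingle_mem_trihedralGroup {u c : Kˣ} {q : ℤ} (i : Fin 3)
    (hc : c ∈ Subgroup.zpowers (u ^ (q ^ 3 + 1))) :
    diagUnits (Pi.mulSingle i c) ∈ trihedralGroup u q := by
  have hdiag : diagUnits ![1, u, u ^ q] ∈ trihedralGroup u q := Subgroup.subset_closure (by simp)
  have hperm : permUnits (finRotate 3)⁻¹ ∈ trihedralGroup u q := Subgroup.subset_closure (by simp)
  have hrot : ∀ t ∈ (trihedralGroup u q).comap diagUnits,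
      t ∘ finRotate 3 ∈ (trihedralGroup u q).comap diagUnits := fun t ht ↦ by
    have hconj := permUnits_mul_diagUnits_mul_inv (finRotate 3)⁻¹ t
    rw [inv_inv] at hconj
    exact Subgroup.mem_comap.2 (hconj ▸ mul_mem (mul_mem hperm ht) (inv_mem hperm))
  exact mulSingle_mem_of_comp_finRotate_mem hrot (Subgroup.mem_comap.2 hdiag) i hc

theorem closure_isPseudoreflection_trihedralGroup (u : Kˣ) (q : ℤ) :
    Subgroup.closure {γ : (Matrix (Fin 3) (Fin 3) K)ˣ |
        γ ∈ trihedralGroup u q ∧ IsPseudoreflection (γ : Matrix (Fin 3) (Fin 3) K)} =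
      (Subgroup.pi Set.univ fun _ ↦ Subgroup.zpowers (u ^ (q ^ 3 + 1))).map diagUnits := by
  apply le_antisymm
  · rw [Subgroup.closure_le]
    rintro γ ⟨hγ, hrefl⟩
    obtain ⟨i, c, hc, rfl⟩ := exists_mulSingle_of_isPseudoreflection hγ hrefl
    exact Subgroup.mem_map_of_mem _ ((Subgroup.mulSingle_mem_pi (f := fun _ ↦ Kˣ) i c).2 fun _ ↦ hc)
  · rw [Subgroup.map_le_iff_le_comap, Subgroup.pi_le_iff]
    rintro i _ ⟨c, hc, rfl⟩
    obtain rfl | hne := eq_or_ne c 1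
    · simp only [map_one, one_mem]
    · exact Subgroup.subset_closure ⟨diagUnits_mulSingle_mem_trihedralGroup i hc,
        isPseudoreflection_diagUnits_iff.2 ⟨i, c, hne, rfl⟩⟩

lemma mem_map_diagUnits_pi_zpowers_iff {v : Kˣ} {g : (Matrix (Fin 3) (Fin 3) K)ˣ} :
    g ∈ (Subgroup.pi Set.univ fun _ ↦ Subgroup.zpowers v).map diagUnits ↔
      ∃ a b c : ℤ, (g : Matrix (Fin 3) (Fin 3) K) =
        diagonal ![(v : K) ^ a, (v : K) ^ b, (v : K) ^ c] := by
  simp only [← Units.val_zpow_eq_zpow_val, ← coe_diagUnits_vecCons, Units.val_inj]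
  constructor
  · rintro ⟨t, ht, rfl⟩
    choose n hn using fun i ↦ ht i (Set.mem_univ i)
    refine ⟨n 0, n 1, n 2, congrArg diagUnits (funext fun i ↦ ?_)⟩
    fin_cases i <;> exact (hn _).symm
  · rintro ⟨a, b, c, rfl⟩
    refine Subgroup.mem_map_of_mem _ fun i _ ↦ ?_
    fin_cases i <;> exact Subgroup.zpow_mem_zpowers v _

theorem stmt_4_general (u : Kˣ) (q : ℤ) (A B : (Matrix (Fin 3) (Fin 3) K)ˣ)
    (hA : (A : Matrix (Fin 3) (Fin 3) K) = diagonal ![1, (u : K), (u : K) ^ q])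
    (hB : (B : Matrix (Fin 3) (Fin 3) K) = !![0, 1, 0; 0, 0, 1; 1, 0, 0])
    (g : (Matrix (Fin 3) (Fin 3) K)ˣ) :
    g ∈ Subgroup.closure {γ : (Matrix (Fin 3) (Fin 3) K)ˣ |
        γ ∈ Subgroup.closure {A, B} ∧
        Module.finrank K
          (LinearMap.ker (toLin' ((γ : Matrix (Fin 3) (Fin 3) K) - 1))) = 2} ↔
      ∃ a b c : ℤ, (g : Matrix (Fin 3) (Fin 3) K) =
        diagonal ![(u : K) ^ ((q ^ 3 + 1) * a), (u : K) ^ ((q ^ 3 + 1) * b),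
          (u : K) ^ ((q ^ 3 + 1) * c)] := by
  obtain rfl : A = diagUnits ![1, u, u ^ q] := Units.ext <| by
    rw [hA, coe_diagUnits_vecCons, Units.val_one, Units.val_zpow_eq_zpow_val]
  obtain rfl : B = permUnits (finRotate 3)⁻¹ := Units.ext <| by
    rw [hB, coe_permUnits, inv_inv]
    ext i j
    fin_cases i <;> fin_cases j <;> simp [PEquiv.toMatrix_apply, Equiv.toPEquiv_apply]
  have hrefl (γ : (Matrix (Fin 3) (Fin 3) K)ˣ) :
      Module.finrank K (LinearMap.ker (toLin' ((γ : Matrix (Fin 3) (Fin 3) K) - 1))) = 2 ↔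
        IsPseudoreflection (γ : Matrix (Fin 3) (Fin 3) K) := by
    simp [isPseudoreflection_iff_finrank_ker]
  simp only [hrefl]
  rw [← trihedralGroup, closure_isPseudoreflection_trihedralGroup,
    mem_map_diagUnits_pi_zpowers_iff]
  simp only [Units.val_zpow_eq_zpow_val, _root_.zpow_mul]

end Trihedral

/-- The subgroup of `G_{d,q}` generated by the elements having `1` as an eigenvalue of
multiplicity exactly `2` (i.e. those whose eigenspace `ker(γ − I₃)` has dimension `2`)
equals the set of diagonal matrices `diag(ξ^{(q³+1)a}, ξ^{(q³+1)b}, ξ^{(q³+1)c})`,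
`a, b, c ∈ ℤ`. -/
theorem stmt_4 (d q : ℕ) (hd : 1 ≤ d) (hq : q < d) (hdq : Nat.gcd d q = 1)
    (ξ : ℂ) (hξ : IsPrimitiveRoot ξ d)
    (A B : (Matrix (Fin 3) (Fin 3) ℂ)ˣ)
    (hA : (A : Matrix (Fin 3) (Fin 3) ℂ) = Matrix.diagonal ![1, ξ, ξ ^ q])
    (hB : (B : Matrix (Fin 3) (Fin 3) ℂ) = !![0,1,0; 0,0,1; 1,0,0])
    (g : (Matrix (Fin 3) (Fin 3) ℂ)ˣ) :
    g ∈ Subgroup.closure {γ : (Matrix (Fin 3) (Fin 3) ℂ)ˣ |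
        γ ∈ Subgroup.closure {A, B} ∧
        Module.finrank ℂ
          (LinearMap.ker (Matrix.toLin' ((γ : Matrix (Fin 3) (Fin 3) ℂ) - 1))) = 2} ↔
      ∃ a b c : ℤ,
        (g : Matrix (Fin 3) (Fin 3) ℂ) =
          Matrix.diagonal ![ξ ^ (((q : ℤ) ^ 3 + 1) * a), ξ ^ (((q : ℤ) ^ 3 + 1) * b),
            ξ ^ (((q : ℤ) ^ 3 + 1) * c)] := by
  lift ξ to ℂˣ using hξ.isUnit (by omega)
  exact stmt_4_general ξ q A B (mod_cast hA) hB g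
end

section
/- Assume d divides q³ + 1 and let β = gcd(d, q² − q + 1). The set of scalar matrices contained in G_{d,q} equals { ξ^{qk(d/β)} · I₃ : k = 0, 1, …, β − 1 }; in particular the scalar matrices in G_{d,q} form a cyclic group of order β. -/
open Matrix

/-!
Let `D(u)` be the diagonal matrix with diagonal `u`. Conjugation by `B` rotates `u`, and the
condition `u₁ u₂^(q²) = u₀^q` on triples of powers of `ξ` holds for the diagonal of `A` and, because
`ξ^(q³+1) = 1`, is invariant under rotation. Conversely, a triple satisfying it is determined by
`u₀` and `u₂`, and so is a product of powers of the two rotations of `(1, ξ, ξ^q)`. Hence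
`G_{d,q}` is the product of `⟨B⟩` and the group `N` of these diagonal matrices. A scalar matrix
`c • 1` is in this product exactly when it is in `N`, that is, when `c` is a power of `ξ` with
`c^(q²-q+1) = 1`. Such `c` are the powers of `ξ^(d/β)`, or equally of `ξ^(q(d/β))` since `q` is
prime to `d`.
-/

section Cyclic

open Subgroup

variable {G : Type*} [Group G] {g x : G} {n : ℕ}

theorem zpowers_pow_of_coprime (h : n.Coprime (orderOf g)) : zpowers (g ^ n) = zpowers g :=
  le_antisymm (zpowers_le.2 (npow_mem_zpowers g n)) (zpowers_le.2 (mem_zpowers_pow_iff.2 h))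

theorem mem_zpowers_pow_orderOf_div_gcd_iff (hg : IsOfFinOrder g) :
    x ∈ zpowers (g ^ (orderOf g / (orderOf g).gcd n)) ↔ x ∈ zpowers g ∧ x ^ n = 1 := by
  have hgcd : (orderOf g).gcd n ∣ orderOf g := Nat.gcd_dvd_left _ _
  constructor
  · rintro ⟨k, rfl⟩
    refine ⟨zpow_mem (npow_mem_zpowers g _) k, ?_⟩
    obtain ⟨b, hb⟩ : (orderOf g).gcd n ∣ n := Nat.gcd_dvd_right _ _
    have hpow : (g ^ (orderOf g / (orderOf g).gcd n)) ^ n = 1 := by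
      calc (g ^ (orderOf g / (orderOf g).gcd n)) ^ n
          = g ^ (orderOf g / (orderOf g).gcd n * (orderOf g).gcd n * b) := by
            rw [mul_assoc, ← hb, pow_mul]
        _ = 1 := by rw [Nat.div_mul_cancel hgcd, pow_mul, pow_orderOf_eq_one, one_pow]
    beta_reduce
    rw [← zpow_natCast, zpow_comm, zpow_natCast, hpow, _root_.one_zpow]
  · rintro ⟨hx, hxn⟩
    obtain ⟨a, rfl⟩ := Submonoid.mem_powers_iff _ _ |>.1 (hg.mem_powers_iff_mem_zpowers.2 hx)
    have hgcd_pow : (g ^ a) ^ (orderOf g).gcd n = 1 :=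
      pow_gcd_eq_one.2 ⟨by rw [pow_right_comm, pow_orderOf_eq_one, one_pow], hxn⟩
    obtain ⟨b, rfl⟩ : orderOf g / (orderOf g).gcd n ∣ a := by
      rw [Nat.div_dvd_iff_dvd_mul hgcd (Nat.gcd_pos_of_pos_left _ hg.orderOf_pos), mul_comm,
        orderOf_dvd_iff_pow_eq_one, pow_mul, hgcd_pow]
    rw [pow_mul]
    exact npow_mem_zpowers _ b

end Cyclic

section MonomialMatrices

variable {n R : Type*} [Fintype n] [DecidableEq n] [Semiring R]

/-- The invertible diagonal matrix with prescribed invertible entries, as a homomorphism. -/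
def diagonalUnits : (n → Rˣ) →* GL n R :=
  (Units.map (diagonalRingHom n R).toMonoidHom).comp MulEquiv.piUnits.symm.toMonoidHom

variable (R) in
/-- Permutation matrices as elements of the general linear group. As in `Matrix.permMatrixHom`,
the image of `σ` is the permutation matrix of `σ⁻¹`, which makes this a homomorphism. -/
def permMatrixUnits : Equiv.Perm n →* GL n R :=
  permMatrixHom.toHomUnits

theorem coe_diagonalUnits (u : n → Rˣ) :
    (diagonalUnits u : Matrix n n R) = diagonal fun i ↦ (u i : R) :=
  rfl

theorem coe_permMatrixUnits (σ : Equiv.Perm n) :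
    (permMatrixUnits R σ : Matrix n n R) = σ⁻¹.permMatrix R :=
  rfl

theorem permMatrixUnits_mul_diagonalUnits_apply (σ : Equiv.Perm n) (u : n → Rˣ) (i j : n) :
    (permMatrixUnits R σ * diagonalUnits u : GL n R) i j =
      if σ⁻¹ i = j then (u j : R) else 0 := by
  rw [Units.val_mul, coe_permMatrixUnits, coe_diagonalUnits, mul_diagonal]
  simp [PEquiv.toMatrix_apply, eq_comm]

theorem permMatrixUnits_conj_diagonalUnits (σ : Equiv.Perm n) (u : n → Rˣ) :
    permMatrixUnits R σ * diagonalUnits u * (permMatrixUnits R σ)⁻¹ =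
      diagonalUnits (u ∘ ⇑σ⁻¹) := by
  rw [mul_inv_eq_iff_eq_mul]
  ext i j
  rw [permMatrixUnits_mul_diagonalUnits_apply, Units.val_mul, coe_permMatrixUnits,
    coe_diagonalUnits, diagonal_mul]
  by_cases h : σ⁻¹ i = j <;> simp_all [PEquiv.toMatrix_apply, eq_comm]

theorem permMatrixUnits_mem_normalizer_map_diagonalUnits {S : Subgroup (n → Rˣ)}
    {σ : Equiv.Perm n} (hS : ∀ u, u ∘ ⇑σ⁻¹ ∈ S ↔ u ∈ S) :
    permMatrixUnits R σ ∈ Subgroup.normalizer (S.map diagonalUnits : Set (GL n R)) := by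
  refine Subgroup.mem_normalizer_iff.2 fun g ↦ ⟨?_, ?_⟩
  · rintro ⟨u, hu, rfl⟩
    exact ⟨_, (hS u).2 hu, (permMatrixUnits_conj_diagonalUnits σ u).symm⟩
  · rintro ⟨u, hu, hconj⟩
    refine ⟨u ∘ σ, (hS _).1 (by simpa [Function.comp_assoc] using hu), ?_⟩
    have hu_conj := permMatrixUnits_conj_diagonalUnits (R := R) σ⁻¹ u
    rw [inv_inv, hconj, map_inv] at hu_conj
    rw [← hu_conj]
    group

theorem permMatrixUnits_mul_diagonalUnits_eq_scalar_iff [Nontrivial R] {σ : Equiv.Perm n}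
    {u : n → Rˣ} {c : Rˣ} :
    permMatrixUnits R σ * diagonalUnits u = GeneralLinearGroup.scalar n c ↔
      σ = 1 ∧ u = fun _ ↦ c := by
  constructor
  · intro h
    have hentry (i j : n) :
        (if σ⁻¹ i = j then (u j : R) else 0) = if i = j then (c : R) else 0 := by
      rw [← permMatrixUnits_mul_diagonalUnits_apply, h, GeneralLinearGroup.coe_scalar,
        scalar_apply, diagonal_apply]
    have hσ : σ = 1 := by
      rw [← inv_eq_one]
      ext i
      by_contra hne
      have hzero := hentry i (σ⁻¹ i)
      rw [if_pos rfl, if_neg (Ne.symm hne : i ≠ σ⁻¹ i)] at hzero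
      exact (u (σ⁻¹ i)).ne_zero hzero
    refine ⟨hσ, funext fun i ↦ Units.ext ?_⟩
    simpa [hσ] using hentry i i
  · rintro ⟨rfl, rfl⟩
    rw [map_one, one_mul]
    rfl

theorem scalar_mem_zpowers_sup_map_diagonalUnits_iff [Nontrivial R] {S : Subgroup (n → Rˣ)}
    {σ : Equiv.Perm n} (hS : ∀ u, u ∘ ⇑σ⁻¹ ∈ S ↔ u ∈ S) {c : Rˣ} :
    GeneralLinearGroup.scalar n c ∈
        Subgroup.zpowers (permMatrixUnits R σ) ⊔ S.map diagonalUnits ↔ (fun _ ↦ c) ∈ S := by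
  have hnormal : Subgroup.zpowers (permMatrixUnits R σ) ≤
      Subgroup.normalizer (S.map diagonalUnits : Set (GL n R)) :=
    Subgroup.zpowers_le.2 (permMatrixUnits_mem_normalizer_map_diagonalUnits hS)
  rw [← SetLike.mem_coe, Subgroup.coe_mul_of_left_le_normalizer_right _ _ hnormal]
  constructor
  · rintro ⟨_, ⟨k, rfl⟩, _, ⟨u, hu, rfl⟩, h⟩
    simp only [← map_zpow] at h
    rwa [← (permMatrixUnits_mul_diagonalUnits_eq_scalar_iff.1 h).2]
  · exact fun hc ↦ ⟨1, one_mem _, _, ⟨_, hc, rfl⟩, one_mul _⟩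

theorem scalar_injective [Nonempty n] :
    Function.Injective (GeneralLinearGroup.scalar n : Rˣ →* GL n R) :=
  Units.map_injective fun _ _ ↦ scalar_inj.1

theorem mem_range_scalar_iff_exists_smul_one [Nonempty n] {g : GL n R} :
    g ∈ (GeneralLinearGroup.scalar n).range ↔ ∃ c : R, (g : Matrix n n R) = c • 1 := by
  constructor
  · rintro ⟨c, rfl⟩
    exact ⟨c, (smul_one_eq_diagonal _).symm⟩
  · rintro ⟨c, hc⟩
    rw [smul_one_eq_diagonal] at hc
    obtain ⟨i⟩ := ‹Nonempty n›
    have hmul : c * (g⁻¹ : GL n R) i i = 1 := by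
      rw [← diagonal_mul (fun _ ↦ c), ← hc, ← Units.val_mul, mul_inv_cancel, Units.val_one,
        one_apply_eq]
    have hmul' : (g⁻¹ : GL n R) i i * c = 1 := by
      rw [← mul_diagonal (fun _ ↦ c), ← hc, ← Units.val_mul, inv_mul_cancel, Units.val_one,
        one_apply_eq]
    exact ⟨⟨c, _, hmul, hmul'⟩, Units.ext hc.symm⟩

end MonomialMatrices

section DiagonalTriples

variable {H : Type*} [CommGroup H] {q : ℕ} {ζ : H} {u : Fin 3 → H}

/-- The triples of powers of `ζ` which occur as diagonals of the diagonal matrices in `G_{d,q}`;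
on exponents `(x, y, z)` modulo `d`, the equation is `y + q² z = q x`. -/
def diagonalTriples (q : ℕ) (ζ : H) : Subgroup (Fin 3 → H) where
  carrier := {u | (∀ i, u i ∈ Subgroup.zpowers ζ) ∧ u 1 * u 2 ^ q ^ 2 = u 0 ^ q}
  one_mem' := ⟨fun _ ↦ one_mem _, by simp⟩
  mul_mem' := fun {u v} ⟨hu, hu'⟩ ⟨hv, hv'⟩ ↦ ⟨fun i ↦ mul_mem (hu i) (hv i), by
    simp only [Pi.mul_apply, mul_pow, ← hu', ← hv', mul_mul_mul_comm]⟩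
  inv_mem' := fun {u} ⟨hu, hu'⟩ ↦ ⟨fun i ↦ inv_mem (hu i), by
    simp only [Pi.inv_apply, inv_pow, ← hu', mul_inv]⟩

theorem const_mem_diagonalTriples_iff {c : H} :
    (fun _ ↦ c) ∈ diagonalTriples q ζ ↔ c ∈ Subgroup.zpowers ζ ∧ c ^ (q ^ 2 - q + 1) = 1 := by
  have hexp : q ^ 2 - q + 1 + q = 1 + q ^ 2 := by
    have hle : q ≤ q ^ 2 := Nat.le_self_pow two_ne_zero q
    omega
  refine and_congr (forall_const _) ?_
  rw [← mul_eq_right (b := c ^ q), ← pow_add, hexp, pow_add, pow_one]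

theorem generator_mem_diagonalTriples (hζ : ζ ^ (q ^ 3 + 1) = 1) :
    ![1, ζ, ζ ^ q] ∈ diagonalTriples q ζ := by
  refine ⟨fun i ↦ ?_, ?_⟩
  · fin_cases i
    exacts [one_mem _, Subgroup.mem_zpowers ζ, Subgroup.npow_mem_zpowers ζ q]
  · calc ζ * (ζ ^ q) ^ q ^ 2 = ζ ^ (q ^ 3 + 1) := by rw [← pow_mul, ← pow_succ', ← pow_succ']
      _ = 1 ^ q := by rw [hζ, one_pow]

theorem comp_finRotate_mem_diagonalTriples (hζ : ζ ^ (q ^ 3 + 1) = 1)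
    (hu : u ∈ diagonalTriples q ζ) : u ∘ finRotate 3 ∈ diagonalTriples q ζ := by
  obtain ⟨hpow, heq⟩ := hu
  refine ⟨fun i ↦ hpow _, ?_⟩
  have hu₂ : u 2 ^ (q ^ 3 + 1) = 1 := by
    obtain ⟨k, hk⟩ := hpow 2
    rw [← hk]
    beta_reduce
    rw [← zpow_natCast, zpow_comm, zpow_natCast, hζ, _root_.one_zpow]
  calc u 2 * u 0 ^ q ^ 2 = u 2 * (u 1 * u 2 ^ q ^ 2) ^ q := by rw [heq, ← pow_mul, sq]
    _ = u 1 ^ q * u 2 ^ (q ^ 3 + 1) := by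
        rw [mul_pow, mul_left_comm, ← pow_mul, ← pow_succ q 2, ← pow_succ']
    _ = u 1 ^ q := by rw [hu₂, mul_one]

theorem comp_finRotate_mem_diagonalTriples_iff (hζ : ζ ^ (q ^ 3 + 1) = 1) :
    u ∘ finRotate 3 ∈ diagonalTriples q ζ ↔ u ∈ diagonalTriples q ζ := by
  refine ⟨fun h ↦ ?_, comp_finRotate_mem_diagonalTriples hζ⟩
  have hcube : ((u ∘ finRotate 3) ∘ finRotate 3) ∘ finRotate 3 = u := by
    ext i; fin_cases i <;> rfl
  rw [← hcube]
  exact comp_finRotate_mem_diagonalTriples hζ (comp_finRotate_mem_diagonalTriples hζ h)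

theorem exists_eq_zpow_mul_zpow_of_mem_diagonalTriples (hu : u ∈ diagonalTriples q ζ) :
    ∃ a b : ℤ, u = ![ζ, ζ ^ q, 1] ^ a * ![ζ ^ q, 1, ζ] ^ b := by
  obtain ⟨hpow, heq⟩ := hu
  obtain ⟨x, hx : ζ ^ x = u 0⟩ := hpow 0
  obtain ⟨z, hz : ζ ^ z = u 2⟩ := hpow 2
  refine ⟨x - q * z, z, funext fun i ↦ ?_⟩
  fin_cases i
  · calc u 0 = ζ ^ (x - q * z + q * z) := by rw [sub_add_cancel, hx]
      _ = ζ ^ (x - q * z) * (ζ ^ q) ^ z := by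
        rw [_root_.zpow_add, _root_.zpow_mul ζ q z, zpow_natCast]
  · calc u 1 = (ζ ^ x) ^ q / (ζ ^ z) ^ q ^ 2 := by rw [hx, hz, ← heq, mul_div_cancel_right]
      _ = (ζ ^ q) ^ (x - q * z) * 1 ^ z := by
        simp only [← zpow_natCast, ← _root_.zpow_mul, _root_.one_zpow, mul_one]
        rw [div_eq_mul_inv, ← _root_.zpow_neg, ← _root_.zpow_add]
        push_cast
        ring_nf
  · calc u 2 = 1 ^ (x - q * z) * ζ ^ z := by rw [_root_.one_zpow, one_mul, hz]

end DiagonalTriples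

section CyclicMonomialGroup

open Subgroup

variable {R : Type*} [CommSemiring R] {q : ℕ} {ζ : Rˣ}

/-- The group `G_{d,q}` attached to a root of unity `ζ` of order `d`. The second generator is `B`,
in the convention of `permMatrixUnits`. -/
def cyclicMonomialGroup (q : ℕ) (ζ : Rˣ) : Subgroup (GL (Fin 3) R) :=
  closure {diagonalUnits ![1, ζ, ζ ^ q], permMatrixUnits R (finRotate 3)⁻¹}

theorem closure_eq_cyclicMonomialGroup {A B : GL (Fin 3) R}
    (hA : (A : Matrix (Fin 3) (Fin 3) R) = diagonal ![1, (ζ : R), (ζ : R) ^ q])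
    (hB : (B : Matrix (Fin 3) (Fin 3) R) = !![0, 1, 0; 0, 0, 1; 1, 0, 0]) :
    closure {A, B} = cyclicMonomialGroup q ζ := by
  have hA_units : A = diagonalUnits ![1, ζ, ζ ^ q] := by
    refine Units.ext (hA.trans (congrArg diagonal (funext fun i ↦ ?_)))
    fin_cases i <;> rfl
  have hB_units : B = permMatrixUnits R (finRotate 3)⁻¹ := by
    refine Units.ext (hB.trans ?_)
    rw [coe_permMatrixUnits, inv_inv]
    ext i j
    fin_cases i <;> fin_cases j <;> simp [PEquiv.toMatrix_apply]
  rw [hA_units, hB_units, cyclicMonomialGroup]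

theorem diagonalUnits_comp_finRotate_mem_cyclicMonomialGroup {u : Fin 3 → Rˣ}
    (hu : diagonalUnits u ∈ cyclicMonomialGroup q ζ) :
    diagonalUnits (u ∘ finRotate 3) ∈ cyclicMonomialGroup q ζ := by
  have hB : permMatrixUnits R (finRotate 3)⁻¹ ∈ cyclicMonomialGroup q ζ :=
    subset_closure (.inr rfl)
  have hconj := permMatrixUnits_conj_diagonalUnits (finRotate 3)⁻¹ u
  rw [inv_inv] at hconj
  exact hconj ▸ mul_mem (mul_mem hB hu) (inv_mem hB)

theorem map_diagonalTriples_le_cyclicMonomialGroup :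
    (diagonalTriples q ζ).map diagonalUnits ≤ cyclicMonomialGroup q ζ := by
  have hA : diagonalUnits ![1, ζ, ζ ^ q] ∈ cyclicMonomialGroup q ζ := subset_closure (.inl rfl)
  have hA₁ : diagonalUnits ![ζ, ζ ^ q, 1] ∈ cyclicMonomialGroup q ζ := by
    convert diagonalUnits_comp_finRotate_mem_cyclicMonomialGroup hA using 2
    ext i; fin_cases i <;> rfl
  have hA₂ : diagonalUnits ![ζ ^ q, 1, ζ] ∈ cyclicMonomialGroup q ζ := by
    convert diagonalUnits_comp_finRotate_mem_cyclicMonomialGroup hA₁ using 2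
    ext i; fin_cases i <;> rfl
  rintro _ ⟨u, hu, rfl⟩
  obtain ⟨a, b, rfl⟩ := exists_eq_zpow_mul_zpow_of_mem_diagonalTriples hu
  rw [map_mul, map_zpow, map_zpow]
  exact mul_mem (zpow_mem hA₁ a) (zpow_mem hA₂ b)

theorem cyclicMonomialGroup_eq_sup (hζ : ζ ^ (q ^ 3 + 1) = 1) :
    cyclicMonomialGroup q ζ =
      zpowers (permMatrixUnits R (finRotate 3)⁻¹) ⊔ (diagonalTriples q ζ).map diagonalUnits := by
  apply le_antisymm
  · refine (closure_le _).2 (Set.pair_subset ?_ ?_)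
    · exact mem_sup_right (mem_map_of_mem _ (generator_mem_diagonalTriples hζ))
    · exact mem_sup_left (mem_zpowers _)
  · exact sup_le (zpowers_le.2 (subset_closure (.inr rfl)))
      map_diagonalTriples_le_cyclicMonomialGroup

theorem coprime_of_dvd_pow_three_add_one {d : ℕ} (h : d ∣ q ^ 3 + 1) : q.Coprime d := by
  refine Nat.Coprime.coprime_dvd_right h ?_
  rw [pow_succ', Nat.coprime_mul_left_add_right]
  exact Nat.coprime_one_right q

theorem orderOf_scalar_generator (hq : orderOf ζ ∣ q ^ 3 + 1) :
    orderOf (GeneralLinearGroup.scalar (Fin 3)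
      (ζ ^ (q * (orderOf ζ / (orderOf ζ).gcd (q ^ 2 - q + 1))))) =
      (orderOf ζ).gcd (q ^ 2 - q + 1) := by
  have hβ : (orderOf ζ).gcd (q ^ 2 - q + 1) ∣ orderOf ζ := Nat.gcd_dvd_left _ _
  have horder := orderOf_pow_orderOf_div (ne_zero_of_dvd_ne_zero (Nat.succ_ne_zero _) hq) hβ
  have hcoprime := (coprime_of_dvd_pow_three_add_one hq).symm.coprime_dvd_left hβ
  rw [orderOf_injective _ scalar_injective, mul_comm, pow_mul,
    Nat.Coprime.orderOf_pow (by rwa [horder]), horder]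

variable [Nontrivial R]

theorem scalar_mem_cyclicMonomialGroup_iff (hζ : ζ ^ (q ^ 3 + 1) = 1) {c : Rˣ} :
    GeneralLinearGroup.scalar (Fin 3) c ∈ cyclicMonomialGroup q ζ ↔
      c ∈ zpowers ζ ∧ c ^ (q ^ 2 - q + 1) = 1 := by
  rw [cyclicMonomialGroup_eq_sup hζ, scalar_mem_zpowers_sup_map_diagonalUnits_iff,
    const_mem_diagonalTriples_iff]
  rw [inv_inv]
  exact fun u ↦ comp_finRotate_mem_diagonalTriples_iff hζ

theorem cyclicMonomialGroup_inf_range_scalar (hq : orderOf ζ ∣ q ^ 3 + 1) :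
    cyclicMonomialGroup q ζ ⊓ (GeneralLinearGroup.scalar (Fin 3)).range =
      zpowers (GeneralLinearGroup.scalar (Fin 3)
        (ζ ^ (q * (orderOf ζ / (orderOf ζ).gcd (q ^ 2 - q + 1))))) := by
  have hfin : IsOfFinOrder ζ := orderOf_pos_iff.1 (Nat.pos_of_dvd_of_pos hq (Nat.succ_pos _))
  have hpow : ζ ^ (q ^ 3 + 1) = 1 := orderOf_dvd_iff_pow_eq_one.1 hq
  have hcoprime : q.Coprime (orderOf (ζ ^ (orderOf ζ / (orderOf ζ).gcd (q ^ 2 - q + 1)))) :=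
    (coprime_of_dvd_pow_three_add_one hq).coprime_dvd_right (orderOf_pow_dvd _)
  have hscalar (c : Rˣ) : GeneralLinearGroup.scalar (Fin 3) c ∈ cyclicMonomialGroup q ζ ↔
      c ∈ zpowers (ζ ^ (q * (orderOf ζ / (orderOf ζ).gcd (q ^ 2 - q + 1)))) := by
    rw [mul_comm, pow_mul, zpowers_pow_of_coprime hcoprime,
      mem_zpowers_pow_orderOf_div_gcd_iff hfin, scalar_mem_cyclicMonomialGroup_iff hpow]
  rw [← MonoidHom.map_zpowers]
  ext g
  constructor
  · rintro ⟨hg, c, rfl⟩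
    exact mem_map_of_mem _ ((hscalar c).1 hg)
  · rintro ⟨c, hc, rfl⟩
    exact ⟨(hscalar c).2 hc, c, rfl⟩

theorem setOf_mem_cyclicMonomialGroup_and_exists_eq_smul_one (hq : orderOf ζ ∣ q ^ 3 + 1) :
    {g : GL (Fin 3) R | g ∈ cyclicMonomialGroup q ζ ∧
        ∃ c : R, (g : Matrix (Fin 3) (Fin 3) R) = c • (1 : Matrix (Fin 3) (Fin 3) R)} =
      zpowers (GeneralLinearGroup.scalar (Fin 3)
        (ζ ^ (q * (orderOf ζ / (orderOf ζ).gcd (q ^ 2 - q + 1))))) := by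
  rw [← cyclicMonomialGroup_inf_range_scalar hq]
  ext g
  exact and_congr_right' mem_range_scalar_iff_exists_smul_one.symm

end CyclicMonomialGroup

theorem stmt_12_general {R : Type*} [CommSemiring R] [Nontrivial R] (d q : ℕ)
    (hdvd : d ∣ q ^ 3 + 1) (ξ : R) (hξ : IsPrimitiveRoot ξ d)
    (A B : (Matrix (Fin 3) (Fin 3) R)ˣ)
    (hA : (A : Matrix (Fin 3) (Fin 3) R) = Matrix.diagonal ![1, ξ, ξ ^ q])
    (hB : (B : Matrix (Fin 3) (Fin 3) R) = !![0, 1, 0; 0, 0, 1; 1, 0, 0]) :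
    {g : (Matrix (Fin 3) (Fin 3) R)ˣ | g ∈ Subgroup.closure {A, B} ∧
        ∃ c : R, (g : Matrix (Fin 3) (Fin 3) R) = c • (1 : Matrix (Fin 3) (Fin 3) R)} =
      {g : (Matrix (Fin 3) (Fin 3) R)ˣ |
        ∃ k < Nat.gcd d (q ^ 2 - q + 1),
          (g : Matrix (Fin 3) (Fin 3) R) =
            ξ ^ (q * k * (d / Nat.gcd d (q ^ 2 - q + 1))) •
              (1 : Matrix (Fin 3) (Fin 3) R)} ∧
    {g : (Matrix (Fin 3) (Fin 3) R)ˣ | g ∈ Subgroup.closure {A, B} ∧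
        ∃ c : R, (g : Matrix (Fin 3) (Fin 3) R) =
          c • (1 : Matrix (Fin 3) (Fin 3) R)}.ncard = Nat.gcd d (q ^ 2 - q + 1) ∧
    ∃ g₀ ∈ {g : (Matrix (Fin 3) (Fin 3) R)ˣ | g ∈ Subgroup.closure {A, B} ∧
        ∃ c : R, (g : Matrix (Fin 3) (Fin 3) R) = c • (1 : Matrix (Fin 3) (Fin 3) R)},
      ∀ g ∈ {g : (Matrix (Fin 3) (Fin 3) R)ˣ | g ∈ Subgroup.closure {A, B} ∧
        ∃ c : R, (g : Matrix (Fin 3) (Fin 3) R) = c • (1 : Matrix (Fin 3) (Fin 3) R)},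
        ∃ n : ℕ, g = g₀ ^ n := by
  have hd : d ≠ 0 := ne_zero_of_dvd_ne_zero (Nat.succ_ne_zero _) hdvd
  obtain ⟨ζ, rfl⟩ := hξ.isUnit hd
  obtain rfl : d = orderOf ζ := (IsPrimitiveRoot.coe_units_iff.1 hξ).eq_orderOf
  rw [closure_eq_cyclicMonomialGroup hA hB,
    setOf_mem_cyclicMonomialGroup_and_exists_eq_smul_one hdvd]
  set β := (orderOf ζ).gcd (q ^ 2 - q + 1)
  set g₀ := GeneralLinearGroup.scalar (Fin 3) (ζ ^ (q * (orderOf ζ / β))) with hg₀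
  have horder : orderOf g₀ = β := orderOf_scalar_generator hdvd
  have hfin : IsOfFinOrder g₀ :=
    orderOf_ne_zero_iff.1 (horder ▸ Nat.gcd_ne_zero_left hd)
  have hpow (k : ℕ) : (g₀ ^ k).val = (ζ : R) ^ (q * k * (orderOf ζ / β)) • 1 := by
    rw [hg₀, ← map_pow, ← pow_mul, mul_right_comm, GeneralLinearGroup.coe_scalar, scalar_apply,
      smul_one_eq_diagonal, Units.val_pow_eq_pow_val]
  refine ⟨?_, ?_, g₀, Subgroup.mem_zpowers g₀, fun g hg ↦ ?_⟩
  · classical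
    ext g
    simp only [SetLike.mem_coe, hfin.mem_zpowers_iff_mem_range_orderOf, Finset.mem_image,
      Finset.mem_range, horder, Set.mem_ofPred_eq, ← hpow, Units.val_inj, eq_comm (a := g)]
  · rw [← Nat.card_coe_set_eq, ← horder]
    exact Nat.card_zpowers g₀
  · obtain ⟨n, hn⟩ := hfin.mem_powers_iff_mem_zpowers.2 hg
    exact ⟨n, hn.symm⟩

/-- Assume `d ∣ q³+1` and let `β = gcd(d, q²−q+1)`.  The set of scalar matrices in
`G_{d,q}` equals `{ ξ^{qk(d/β)} · I₃ : k = 0, …, β−1 }`; in particular the scalar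
matrices in `G_{d,q}` form a cyclic group of order `β`. -/
theorem stmt_12 (d q : ℕ) (hd : 1 ≤ d) (hq : q < d) (hdq : Nat.gcd d q = 1)
    (hdvd : d ∣ q ^ 3 + 1)
    (ξ : ℂ) (hξ : IsPrimitiveRoot ξ d)
    (A B : (Matrix (Fin 3) (Fin 3) ℂ)ˣ)
    (hA : (A : Matrix (Fin 3) (Fin 3) ℂ) = Matrix.diagonal ![1, ξ, ξ ^ q])
    (hB : (B : Matrix (Fin 3) (Fin 3) ℂ) = !![0,1,0; 0,0,1; 1,0,0]) :
    {g : (Matrix (Fin 3) (Fin 3) ℂ)ˣ | g ∈ Subgroup.closure {A, B} ∧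
        ∃ c : ℂ, (g : Matrix (Fin 3) (Fin 3) ℂ) = c • (1 : Matrix (Fin 3) (Fin 3) ℂ)} =
      {g : (Matrix (Fin 3) (Fin 3) ℂ)ˣ |
        ∃ k < Nat.gcd d (q ^ 2 - q + 1),
          (g : Matrix (Fin 3) (Fin 3) ℂ) =
            ξ ^ (q * k * (d / Nat.gcd d (q ^ 2 - q + 1))) •
              (1 : Matrix (Fin 3) (Fin 3) ℂ)} ∧
    {g : (Matrix (Fin 3) (Fin 3) ℂ)ˣ | g ∈ Subgroup.closure {A, B} ∧
        ∃ c : ℂ, (g : Matrix (Fin 3) (Fin 3) ℂ) =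
          c • (1 : Matrix (Fin 3) (Fin 3) ℂ)}.ncard = Nat.gcd d (q ^ 2 - q + 1) ∧
    ∃ g₀ ∈ {g : (Matrix (Fin 3) (Fin 3) ℂ)ˣ | g ∈ Subgroup.closure {A, B} ∧
        ∃ c : ℂ, (g : Matrix (Fin 3) (Fin 3) ℂ) = c • (1 : Matrix (Fin 3) (Fin 3) ℂ)},
      ∀ g ∈ {g : (Matrix (Fin 3) (Fin 3) ℂ)ˣ | g ∈ Subgroup.closure {A, B} ∧
        ∃ c : ℂ, (g : Matrix (Fin 3) (Fin 3) ℂ) = c • (1 : Matrix (Fin 3) (Fin 3) ℂ)},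
        ∃ n : ℕ, g = g₀ ^ n := by
  exact stmt_12_general d q hdvd ξ hξ A B hA hB
end
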